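/- Theorem (off-policy representation bound for general latent policies): Let π* be a policy in a finite MDP and d^off a probability distribution on S with d^off(s) > 0 whenever d^{π*}(s) > 0. Let Z be a finite set, φ : S → Z, R_Z : Z×A → [−R_max, R_max], and P_Z a function where P_Z(·|z,a) is a probability distribution on S for every (z,a) satisfying P_Z(s'|φ(s),a) > 0 whenever P(s'|s,a) > 0 and d^off(s) > 0. Define J_R = √( ∑_{s∈S} d^off(s) (1/|A|) ∑_{a∈A} (R(s,a) − R_Z(φ(s),a))² ), J_T = √( (1/2) ∑_{s∈S} d^off(s) (1/|A|) ∑_{a∈A} D_KL(P(·|s,a) ‖ P_Z(·|φ(s),a)) ), and ε = (|A|/(1−γ)) J_R + (2γ|A| R_max/(1−γ)²) J_T. Then for any latent policy π_Z assigning to each z∈Z a probability distribution π_Z(·|z) on A with π_Z(a|z) > 0 for all a,z, PerfDiff(π_Z∘φ, π*) ≤ (1 + D_χ²(d^{π*}‖d^off)^{1/2}) · ε + (2R_max/(1−γ)²) · √( (1/2) ∑_{z∈Z} d^{π*}_Z(z) D_KL(π_{*,Z}(·|z) ‖ π_Z(·|z)) ), where π_Z∘φ is the policy s ↦ π_Z(·|φ(s))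 and d^{π*}_Z, π_{*,Z} are the marginalizations onto Z with respect to d^{π*}. -/

import Mathlib

open Finset

noncomputable section

variable {S A Z : Type*}

/-- State distribution at time `t` when following policy `π` from initial distribution `μ`. -/
def stateDist [Fintype S] [Fintype A] (P : S → A → S → ℝ) (π : S → A → ℝ)
    (μ : S → ℝ) : ℕ → S → ℝ
  | 0 => μ
  | t + 1 => fun s' => ∑ s : S, ∑ a : A, π s a * P s a s' * stateDist P π μ t s

/-- Discounted visitation distribution `d^π`. -/
def visitation [Fintype S] [Fintype A] (P : S → A → S → ℝ) (π : S → A → ℝ)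
    (μ : S → ℝ) (γ : ℝ) (s : S) : ℝ :=
  (1 - γ) * ∑' t : ℕ, γ ^ t * stateDist P π μ t s

/-- Performance `J(π)`. -/
def perf [Fintype S] [Fintype A] (P : S → A → S → ℝ) (R : S → A → ℝ)
    (π : S → A → ℝ) (μ : S → ℝ) (γ : ℝ) : ℝ :=
  ∑' t : ℕ, γ ^ t * ∑ s : S, ∑ a : A, R s a * π s a * stateDist P π μ t s

/-- `PerfDiff(π, π')`. -/
def perfDiff [Fintype S] [Fintype A] (P : S → A → S → ℝ) (R : S → A → ℝ)
    (μ : S → ℝ) (γ : ℝ) (π π' : S → A → ℝ) : ℝ :=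
  |perf P R π μ γ - perf P R π' μ γ|

/-- Total variation distance. -/
def dTV {X : Type*} [Fintype X] (p q : X → ℝ) : ℝ :=
  (1 / 2) * ∑ x : X, |p x - q x|

/-- KL divergence. -/
def dKL {X : Type*} [Fintype X] (p q : X → ℝ) : ℝ :=
  ∑ x : X, p x * Real.log (p x / q x)

/-- Pearson chi-squared divergence (terms with `q x = 0` vanish by the `x / 0 = 0` convention). -/
def dChi2 {X : Type*} [Fintype X] (p q : X → ℝ) : ℝ :=
  ∑ x : X, (p x - q x) ^ 2 / q x

/-- `Err_ρ(π1, π2, F)` for a reward-like function `F`. -/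
def errF [Fintype S] [Fintype A] (ρ : S → ℝ) (π1 π2 : S → A → ℝ) (F : S → A → ℝ) : ℝ :=
  |∑ s : S, ρ s * ∑ a : A, (π1 s a - π2 s a) * F s a|

/-- `Err_ρ(π1, π2, G)` for a transition-like function `G`. -/
def errG [Fintype S] [Fintype A] (ρ : S → ℝ) (π1 π2 : S → A → ℝ) (G : S → A → S → ℝ) : ℝ :=
  ∑ s' : S, |∑ s : S, ρ s * ∑ a : A, (π1 s a - π2 s a) * G s a s'|

/-- Marginalization `ρ_Z` of a state distribution onto `Z` via `φ`. -/
def margDist [Fintype S] [DecidableEq Z] (φ : S → Z) (ρ : S → ℝ) (z : Z) : ℝ :=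
  ∑ s : S, if φ s = z then ρ s else 0

/-- Marginalization `π_Z` of a policy onto `Z` via `φ`, w.r.t. the state distribution `ρ`
(by the `x / 0 = 0` convention it takes a fixed arbitrary value when `ρ_Z(z) = 0`). -/
def margPolicy [Fintype S] [DecidableEq Z] (φ : S → Z) (ρ : S → ℝ) (π : S → A → ℝ)
    (z : Z) (a : A) : ℝ :=
  (∑ s : S, if φ s = z then ρ s * π s a else 0) / margDist φ ρ z

/-- Log-linear (softmax) policy `π_θ(a|z)`. -/
def softmaxPol {d : ℕ} [Fintype A] (θ : A → Fin d → ℝ) (z : Fin d → ℝ) (a : A) : ℝ :=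
  Real.exp (∑ i, θ a i * z i) / ∑ b : A, Real.exp (∑ i, θ b i * z i)

/-- Sum of absolute values of all partial derivatives of `L : ℝ^{d×|A|} → ℝ` at `θ`. -/
def gradL1 {d : ℕ} [Fintype A] [DecidableEq A] (L : (A → Fin d → ℝ) → ℝ)
    (θ : A → Fin d → ℝ) : ℝ :=
  ∑ a : A, ∑ i : Fin d, |fderiv ℝ L θ (Pi.single a (Pi.single i 1))|

/-! By the performance difference lemma, `(1 - γ) (J(π) - J(π*))` is the average over `d^{π*}` of
`∑ₐ (π(a|s) - π*(a|s)) Q(s, a)`, where `Q` is the action value of `π`. Replacing `R` and `P` inside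
`Q` by their latent models `R_Z` and `P_Z` leaves a function of `(φ(s), a)`, for which only the
marginalization of `π*` matters; Pinsker's inequality compares that marginalization with `π_Z`. The
two modelling errors are moved from `d^{π*}` to `d^off` by the Cauchy–Schwarz inequality, at the
cost of the factor `1 + √χ²`, and the transition error is again bounded by Pinsker's inequality. -/

open InformationTheory (klFun)

/-! ### Total variation, relative entropy and the `χ²` divergence -/

lemma two_mul_sub_one_le_add_one_mul_log {x : ℝ} (hx : 1 ≤ x) :
    2 * (x - 1) ≤ (x + 1) * Real.log x := by
  have h := Real.le_log_one_add_of_nonneg (sub_nonneg.2 hx)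
  rw [add_sub_cancel, div_le_iff₀ (by linarith)] at h
  linarith

lemma add_one_mul_log_le_two_mul_sub_one {x : ℝ} (hx₀ : 0 < x) (hx₁ : x ≤ 1) :
    (x + 1) * Real.log x ≤ 2 * (x - 1) := by
  have h := two_mul_sub_one_le_add_one_mul_log ((one_le_inv₀ hx₀).2 hx₁)
  rw [Real.log_inv] at h
  calc (x + 1) * Real.log x = -(x * ((x⁻¹ + 1) * -Real.log x)) := by field_simp; ring
    _ ≤ -(x * (2 * (x⁻¹ - 1))) := neg_le_neg (mul_le_mul_of_nonneg_left h hx₀.le)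
    _ = 2 * (x - 1) := by field_simp; ring

lemma three_mul_sub_one_sq_le_mul_klFun {x : ℝ} (hx : 0 ≤ x) :
    3 * (x - 1) ^ 2 ≤ (2 * x + 4) * klFun x := by
  let f : ℝ → ℝ := fun y => (2 * y + 4) * klFun y - 3 * (y - 1) ^ 2
  have hf_one : f 1 = 0 := by simp [f, InformationTheory.klFun_one]
  have hf_cont : Continuous f := by
    have := InformationTheory.continuous_klFun
    fun_prop
  have hf_deriv {y : ℝ} (hy : 0 < y) :
      HasDerivAt f (4 * ((y + 1) * Real.log y - 2 * (y - 1))) y := by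
    have hlin := ((hasDerivAt_id y).const_mul 2).add_const 4
    have hsq := (((hasDerivAt_id y).sub_const 1).pow 2).const_mul 3
    refine ((hlin.mul (InformationTheory.hasDerivAt_klFun hy.ne')).sub hsq).congr_deriv ?_
    simp only [InformationTheory.klFun_apply, id]
    ring
  suffices f 1 ≤ f x from sub_nonneg.1 (hf_one ▸ this)
  rcases le_total 1 x with h | h
  · refine monotoneOn_of_deriv_nonneg (convex_Ici 1) hf_cont.continuousOn ?_ ?_
      Set.self_mem_Ici h h
    all_goals
      intro y hy
      rw [interior_Ici, Set.mem_Ioi] at hy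
      have hy' := hf_deriv (zero_lt_one.trans hy)
    · exact hy'.differentiableAt.differentiableWithinAt
    · rw [hy'.deriv]
      linarith [two_mul_sub_one_le_add_one_mul_log hy.le]
  · refine antitoneOn_of_deriv_nonpos (convex_Icc 0 1) hf_cont.continuousOn ?_ ?_
      ⟨hx, h⟩ ⟨zero_le_one, le_rfl⟩ h
    all_goals
      intro y hy
      rw [interior_Icc] at hy
      have hy' := hf_deriv hy.1
    · exact hy'.differentiableAt.differentiableWithinAt
    · rw [hy'.deriv]
      linarith [add_one_mul_log_le_two_mul_sub_one hy.1 hy.2.le]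

lemma three_mul_sub_sq_le_mul_klFun_div {p q : ℝ} (hp : 0 ≤ p) (hq : 0 ≤ q) (h : 0 < p → 0 < q) :
    3 * (p - q) ^ 2 ≤ (2 * p + 4 * q) * (q * klFun (p / q)) := by
  rcases hq.eq_or_lt with rfl | hq
  · obtain rfl : p = 0 := hp.antisymm' (not_lt.1 fun hp' => (h hp').false)
    simp
  · calc 3 * (p - q) ^ 2 = q ^ 2 * (3 * (p / q - 1) ^ 2) := by field_simp
      _ ≤ q ^ 2 * ((2 * (p / q) + 4) * klFun (p / q)) := by
        gcongr q ^ 2 * ?_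
        exact three_mul_sub_one_sq_le_mul_klFun (div_nonneg hp hq.le)
      _ = (2 * p + 4 * q) * (q * klFun (p / q)) := by field_simp

section Divergence

variable {X : Type*} [Fintype X] {p q : X → ℝ}

lemma sum_mul_klFun_div_eq_dKL (hp : p ∈ stdSimplex ℝ X) (hq : q ∈ stdSimplex ℝ X)
    (h : ∀ x, 0 < p x → 0 < q x) :
    ∑ x, q x * klFun (p x / q x) = dKL p q := by
  have hterm (x : X) : q x * klFun (p x / q x) = p x * Real.log (p x / q x) + q x - p x := by
    rw [InformationTheory.klFun_apply]
    rcases (hp.1 x).eq_or_lt with hpx | hpx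
    · simp [← hpx]
    · have := (h x hpx).ne'
      field_simp
  simp only [hterm, sum_sub_distrib, sum_add_distrib, hp.2, hq.2, dKL, add_sub_cancel_right]

/-- **Pinsker's inequality**, by Cauchy–Schwarz with weights `(2 p + 4 q) / 3` of total mass `2`. -/
lemma dTV_sq_le_half_dKL (hp : p ∈ stdSimplex ℝ X) (hq : q ∈ stdSimplex ℝ X)
    (h : ∀ x, 0 < p x → 0 < q x) :
    dTV p q ^ 2 ≤ 1 / 2 * dKL p q := by
  have hmass : ∑ x, (2 * p x + 4 * q x) / 3 = 2 := by
    rw [← sum_div, sum_add_distrib, ← mul_sum, ← mul_sum, hp.2, hq.2]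
    norm_num
  have hcs : (∑ x, |p x - q x|) ^ 2 ≤
      (∑ x, (2 * p x + 4 * q x) / 3) * ∑ x, q x * klFun (p x / q x) := by
    refine sum_sq_le_sum_mul_sum_of_sq_le_mul _ (fun x _ => ?_) (fun x _ => ?_) fun x _ => ?_
    · linarith [hp.1 x, hq.1 x]
    · exact mul_nonneg (hq.1 x)
        (InformationTheory.klFun_nonneg (div_nonneg (hp.1 x) (hq.1 x)))
    · rw [sq_abs]
      linarith [three_mul_sub_sq_le_mul_klFun_div (hp.1 x) (hq.1 x) (h x)]
  rw [hmass, sum_mul_klFun_div_eq_dKL hp hq h] at hcs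
  rw [dTV, mul_pow]
  linarith

lemma dTV_comm (p q : X → ℝ) : dTV p q = dTV q p := by
  simp only [dTV, abs_sub_comm]

lemma abs_sum_sub_mul_le_dTV (p q : X → ℝ) {f : X → ℝ} {C : ℝ} (hf : ∀ x, |f x| ≤ C) :
    |∑ x, (p x - q x) * f x| ≤ 2 * C * dTV p q :=
  calc |∑ x, (p x - q x) * f x| ≤ ∑ x, |p x - q x| * |f x| := by
        simpa only [abs_mul] using abs_sum_le_sum_abs (fun x => (p x - q x) * f x) univ
    _ ≤ ∑ x, |p x - q x| * C := by gcongr with x; exact hf x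
    _ = 2 * C * dTV p q := by rw [← sum_mul, dTV]; ring

lemma abs_sum_mul_le_of_mem_stdSimplex (hp : p ∈ stdSimplex ℝ X) {f : X → ℝ} {C : ℝ}
    (hf : ∀ x, |f x| ≤ C) : |∑ x, p x * f x| ≤ C :=
  calc |∑ x, p x * f x| ≤ ∑ x, p x * |f x| := by
        simpa only [abs_mul, abs_of_nonneg (hp.1 _)] using
          abs_sum_le_sum_abs (fun x => p x * f x) univ
    _ ≤ ∑ x, p x * C := by gcongr with x; exacts [hp.1 x, hf x]
    _ = C := by rw [← sum_mul, hp.2, one_mul]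

lemma sum_mul_le_sum_mul_of_pos {w g h : X → ℝ} (hw : ∀ x, 0 ≤ w x)
    (hgh : ∀ x, 0 < w x → g x ≤ h x) : ∑ x, w x * g x ≤ ∑ x, w x * h x := by
  refine sum_le_sum fun x _ => ?_
  rcases (hw x).eq_or_lt with hx | hx
  · simp [← hx]
  · exact mul_le_mul_of_nonneg_left (hgh x hx) hx.le

lemma sum_mul_le_sqrt_sum_mul_sq (hp : p ∈ stdSimplex ℝ X) (f : X → ℝ) :
    ∑ x, p x * f x ≤ √(∑ x, p x * f x ^ 2) :=
  Real.le_sqrt_of_sq_le <|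
    Real.pow_arith_mean_le_arith_mean_pow_of_even _ _ _ (fun x _ => hp.1 x) hp.2 even_two

lemma sum_sub_mul_le_sqrt_dChi2_mul (hq : ∀ x, 0 ≤ q x) (h : ∀ x, q x = 0 → p x = 0)
    (f : X → ℝ) :
    ∑ x, (p x - q x) * f x ≤ √(dChi2 p q) * √(∑ x, q x * f x ^ 2) := by
  have hchi (x : X) : 0 ≤ (p x - q x) ^ 2 / q x := div_nonneg (sq_nonneg _) (hq x)
  rw [dChi2, ← Real.sqrt_mul (sum_nonneg fun x _ => hchi x)]
  refine Real.le_sqrt_of_sq_le <| sum_sq_le_sum_mul_sum_of_sq_le_mul _ (fun x _ => hchi x)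
    (fun x _ => mul_nonneg (hq x) (sq_nonneg _)) fun x _ => le_of_eq ?_
  rcases eq_or_ne (q x) 0 with hx | hx
  · simp [hx, h x hx]
  · field_simp

lemma sum_mul_le_one_add_sqrt_dChi2_mul (hq : q ∈ stdSimplex ℝ X) (h : ∀ x, q x = 0 → p x = 0)
    (f : X → ℝ) :
    ∑ x, p x * f x ≤ (1 + √(dChi2 p q)) * √(∑ x, q x * f x ^ 2) :=
  calc ∑ x, p x * f x = ∑ x, q x * f x + ∑ x, (p x - q x) * f x := by
        simp only [sub_mul, sum_sub_distrib, add_sub_cancel]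
    _ ≤ √(∑ x, q x * f x ^ 2) + √(dChi2 p q) * √(∑ x, q x * f x ^ 2) :=
        add_le_add (sum_mul_le_sqrt_sum_mul_sq hq f) (sum_sub_mul_le_sqrt_dChi2_mul hq.1 h f)
    _ = (1 + √(dChi2 p q)) * √(∑ x, q x * f x ^ 2) := by ring

end Divergence

/-! ### Occupancy and performance -/

section Occupancy

variable [Fintype S] [Fintype A] {P : S → A → S → ℝ} {π : S → A → ℝ} {μ : S → ℝ} {γ : ℝ}

lemma sum_stateDist_succ_mul (P : S → A → S → ℝ) (π : S → A → ℝ) (μ : S → ℝ) (t : ℕ)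
    (V : S → ℝ) :
    ∑ s', stateDist P π μ (t + 1) s' * V s' =
      ∑ s, stateDist P π μ t s * ∑ a, π s a * ∑ s', P s a s' * V s' := by
  simp only [stateDist, sum_mul, mul_sum]
  rw [sum_comm]
  refine sum_congr rfl fun s _ => ?_
  rw [sum_comm]
  exact sum_congr rfl fun a _ => sum_congr rfl fun s' _ => by ring

lemma stateDist_mem_stdSimplex (hP : ∀ s a, P s a ∈ stdSimplex ℝ S)
    (hπ : ∀ s, π s ∈ stdSimplex ℝ A) (hμ : μ ∈ stdSimplex ℝ S) (t : ℕ) :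
    stateDist P π μ t ∈ stdSimplex ℝ S := by
  induction t with
  | zero => exact hμ
  | succ t ih =>
    refine ⟨fun s' => sum_nonneg fun s _ => sum_nonneg fun a _ =>
      mul_nonneg (mul_nonneg ((hπ s).1 a) ((hP s a).1 s')) (ih.1 s), ?_⟩
    simpa only [mul_one, (hP _ _).2, (hπ _).2, ih.2] using sum_stateDist_succ_mul P π μ t fun _ => 1

lemma summable_pow_mul_stateDist (hP : ∀ s a, P s a ∈ stdSimplex ℝ S)
    (hπ : ∀ s, π s ∈ stdSimplex ℝ A) (hμ : μ ∈ stdSimplex ℝ S) (hγ₀ : 0 ≤ γ) (hγ₁ : γ < 1)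
    (s : S) : Summable fun t => γ ^ t * stateDist P π μ t s := by
  have hdist (t : ℕ) := mem_Icc_of_mem_stdSimplex (stateDist_mem_stdSimplex hP hπ hμ t) s
  exact (summable_geometric_of_lt_one hγ₀ hγ₁).of_nonneg_of_le
    (fun t => mul_nonneg (pow_nonneg hγ₀ t) (hdist t).1)
    fun t => mul_le_of_le_one_right (pow_nonneg hγ₀ t) (hdist t).2

lemma hasSum_sum_visitation_mul (hP : ∀ s a, P s a ∈ stdSimplex ℝ S)
    (hπ : ∀ s, π s ∈ stdSimplex ℝ A) (hμ : μ ∈ stdSimplex ℝ S) (hγ₀ : 0 ≤ γ) (hγ₁ : γ < 1)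
    (f : S → ℝ) :
    HasSum (fun t => (1 - γ) * (γ ^ t * ∑ s, stateDist P π μ t s * f s))
      (∑ s, visitation P π μ γ s * f s) := by
  have h : HasSum (fun t => ∑ s, (1 - γ) * (γ ^ t * stateDist P π μ t s) * f s)
      (∑ s, visitation P π μ γ s * f s) := hasSum_sum fun s _ =>
    ((summable_pow_mul_stateDist hP hπ hμ hγ₀ hγ₁ s).hasSum.mul_left (1 - γ)).mul_right (f s)
  simpa only [mul_sum, mul_assoc] using h

lemma visitation_mem_stdSimplex (hP : ∀ s a, P s a ∈ stdSimplex ℝ S)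
    (hπ : ∀ s, π s ∈ stdSimplex ℝ A) (hμ : μ ∈ stdSimplex ℝ S) (hγ₀ : 0 ≤ γ) (hγ₁ : γ < 1) :
    visitation P π μ γ ∈ stdSimplex ℝ S := by
  have hdist := stateDist_mem_stdSimplex hP hπ hμ
  refine ⟨fun s => mul_nonneg (sub_nonneg.2 hγ₁.le) <| tsum_nonneg fun t =>
    mul_nonneg (pow_nonneg hγ₀ t) ((hdist t).1 s), ?_⟩
  have h := hasSum_sum_visitation_mul hP hπ hμ hγ₀ hγ₁ fun _ => 1
  simp only [mul_one, (hdist _).2] at h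
  rw [h.unique ((hasSum_geometric_of_lt_one hγ₀ hγ₁).mul_left (1 - γ)),
    mul_inv_cancel₀ (sub_pos.2 hγ₁).ne']

lemma sum_visitation_mul_reward (hP : ∀ s a, P s a ∈ stdSimplex ℝ S)
    (hπ : ∀ s, π s ∈ stdSimplex ℝ A) (hμ : μ ∈ stdSimplex ℝ S) (hγ₀ : 0 ≤ γ) (hγ₁ : γ < 1)
    (R : S → A → ℝ) :
    ∑ s, visitation P π μ γ s * ∑ a, π s a * R s a = (1 - γ) * perf P R π μ γ := by
  rw [← (hasSum_sum_visitation_mul hP hπ hμ hγ₀ hγ₁ _).tsum_eq, tsum_mul_left, perf]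
  simp only [mul_sum, mul_comm, mul_left_comm]

lemma sum_visitation_mul_eq_add (hP : ∀ s a, P s a ∈ stdSimplex ℝ S)
    (hπ : ∀ s, π s ∈ stdSimplex ℝ A) (hμ : μ ∈ stdSimplex ℝ S) (hγ₀ : 0 ≤ γ) (hγ₁ : γ < 1)
    (V : S → ℝ) :
    ∑ s, visitation P π μ γ s * V s = (1 - γ) * ∑ s, μ s * V s +
      γ * ∑ s, visitation P π μ γ s * ∑ a, π s a * ∑ s', P s a s' * V s' := by
  have h := hasSum_sum_visitation_mul hP hπ hμ hγ₀ hγ₁ V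
  rw [← h.tsum_eq, h.summable.tsum_eq_zero_add,
    ← ((hasSum_sum_visitation_mul hP hπ hμ hγ₀ hγ₁ _).mul_left γ).tsum_eq]
  simp only [sum_stateDist_succ_mul, pow_succ, pow_zero, one_mul]
  congr 2 with t
  ring

end Occupancy

section Bellman

variable [Fintype S] {X : Type*}

/-- The one-step lookahead `R(x, a) + γ ∑ P(s'|x, a) V(s')` of a value function `V` on states. The
source `x` need not be a state, so that the formula also covers a latent model `(P_Z, R_Z)`. -/
def bellmanBackup (P : X → A → S → ℝ) (R : X → A → ℝ) (γ : ℝ) (V : S → ℝ) (x : X) (a : A) : ℝ :=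
  R x a + γ * ∑ s', P x a s' * V s'

lemma abs_bellmanBackup_le {P : X → A → S → ℝ} (hP : ∀ x a, P x a ∈ stdSimplex ℝ S)
    {R : X → A → ℝ} {r : ℝ} (hR : ∀ x a, |R x a| ≤ r) {γ : ℝ} (hγ₀ : 0 ≤ γ)
    {V : S → ℝ} {C : ℝ} (hV : ∀ s, |V s| ≤ C) (x : X) (a : A) :
    |bellmanBackup P R γ V x a| ≤ r + γ * C := by
  refine (abs_add_le _ _).trans (add_le_add (hR x a) ?_)
  rw [abs_mul, abs_of_nonneg hγ₀]
  exact mul_le_mul_of_nonneg_left (abs_sum_mul_le_of_mem_stdSimplex (hP x a) hV) hγ₀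

variable [Fintype A] {P : S → A → S → ℝ} {π : S → A → ℝ} {μ : S → ℝ} {γ : ℝ}

/-- The Bellman evaluation operator `T^π`, whose fixed point is the value function of `π`. -/
def bellmanOp (P : S → A → S → ℝ) (R : S → A → ℝ) (γ : ℝ) (π : S → A → ℝ) (V : S → ℝ) (s : S) :
    ℝ :=
  ∑ a, π s a * bellmanBackup P R γ V s a

lemma contractingWith_bellmanOp (hP : ∀ s a, P s a ∈ stdSimplex ℝ S)
    (hπ : ∀ s, π s ∈ stdSimplex ℝ A) (R : S → A → ℝ) (hγ₀ : 0 ≤ γ) (hγ₁ : γ < 1) :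
    ContractingWith ⟨γ, hγ₀⟩ (bellmanOp P R γ π) := by
  refine ⟨hγ₁, LipschitzWith.of_dist_le_mul fun V W =>
    (dist_pi_le_iff (by positivity)).2 fun s => ?_⟩
  have hdiff : bellmanOp P R γ π V s - bellmanOp P R γ π W s =
      ∑ a, π s a * (γ * ∑ s', P s a s' * (V s' - W s')) := by
    simp only [bellmanOp, bellmanBackup, ← sum_sub_distrib, ← mul_sub, add_sub_add_left_eq_sub]
  rw [Real.dist_eq, hdiff]
  refine abs_sum_mul_le_of_mem_stdSimplex (hπ s) fun a => ?_
  rw [abs_mul, abs_of_nonneg hγ₀]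
  exact mul_le_mul_of_nonneg_left
    (abs_sum_mul_le_of_mem_stdSimplex (hP s a) (dist_le_pi_dist V W)) hγ₀

lemma abs_le_of_isFixedPt_bellmanOp (hP : ∀ s a, P s a ∈ stdSimplex ℝ S)
    (hπ : ∀ s, π s ∈ stdSimplex ℝ A) {R : S → A → ℝ} {r : ℝ} (hR : ∀ s a, |R s a| ≤ r)
    (hγ₀ : 0 ≤ γ) (hγ₁ : γ < 1) {V : S → ℝ} (hV : Function.IsFixedPt (bellmanOp P R γ π) V)
    (s : S) : |V s| ≤ r / (1 - γ) := by
  have : Nonempty S := ⟨s⟩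
  have hnorm : ‖V‖ ≤ r + γ * ‖V‖ := (pi_norm_le_iff_of_nonempty V).2 fun s => by
    rw [← congrFun hV s]
    exact abs_sum_mul_le_of_mem_stdSimplex (hπ s)
      (abs_bellmanBackup_le hP hR hγ₀ (norm_le_pi_norm V) s)
  rw [le_div_iff₀ (sub_pos.2 hγ₁)]
  calc |V s| * (1 - γ) ≤ ‖V‖ * (1 - γ) :=
        mul_le_mul_of_nonneg_right (norm_le_pi_norm V s) (sub_nonneg.2 hγ₁.le)
    _ ≤ r := by linarith

lemma exists_isFixedPt_bellmanOp_abs_le (hP : ∀ s a, P s a ∈ stdSimplex ℝ S)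
    (hπ : ∀ s, π s ∈ stdSimplex ℝ A) {R : S → A → ℝ} {r : ℝ} (hR : ∀ s a, |R s a| ≤ r)
    (hγ₀ : 0 ≤ γ) (hγ₁ : γ < 1) :
    ∃ V, Function.IsFixedPt (bellmanOp P R γ π) V ∧ ∀ s, |V s| ≤ r / (1 - γ) :=
  have hfix := (contractingWith_bellmanOp hP hπ R hγ₀ hγ₁).fixedPoint_isFixedPt
  ⟨_, hfix, abs_le_of_isFixedPt_bellmanOp hP hπ hR hγ₀ hγ₁ hfix⟩

lemma one_sub_mul_sum_sub_perf (hP : ∀ s a, P s a ∈ stdSimplex ℝ S)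
    (hπ : ∀ s, π s ∈ stdSimplex ℝ A) (hμ : μ ∈ stdSimplex ℝ S) (hγ₀ : 0 ≤ γ) (hγ₁ : γ < 1)
    (R : S → A → ℝ) (V : S → ℝ) :
    (1 - γ) * (∑ s, μ s * V s - perf P R π μ γ) =
      ∑ s, visitation P π μ γ s * (V s - bellmanOp P R γ π V s) := by
  have hop (s : S) : bellmanOp P R γ π V s =
      ∑ a, π s a * R s a + γ * ∑ a, π s a * ∑ s', P s a s' * V s' := by
    simp only [bellmanOp, bellmanBackup, mul_add, sum_add_distrib, mul_sum, mul_left_comm γ]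
  have hflow := sum_visitation_mul_eq_add hP hπ hμ hγ₀ hγ₁ V
  have hreward := sum_visitation_mul_reward hP hπ hμ hγ₀ hγ₁ R
  simp only [hop, mul_sub, mul_add, sum_sub_distrib, sum_add_distrib, mul_left_comm _ γ,
    ← mul_sum] at hflow hreward ⊢
  linarith

/-- The **performance difference lemma**: as `V` is the value function of `π`, its one-step
lookahead is the action value of `π`. -/
lemma one_sub_mul_perfDiff_eq_errF (hP : ∀ s a, P s a ∈ stdSimplex ℝ S) {π' : S → A → ℝ}
    (hπ : ∀ s, π s ∈ stdSimplex ℝ A) (hπ' : ∀ s, π' s ∈ stdSimplex ℝ A)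
    (hμ : μ ∈ stdSimplex ℝ S) (hγ₀ : 0 ≤ γ) (hγ₁ : γ < 1) {R : S → A → ℝ} {V : S → ℝ}
    (hV : Function.IsFixedPt (bellmanOp P R γ π) V) :
    (1 - γ) * perfDiff P R μ γ π π' =
      errF (visitation P π' μ γ) π π' (bellmanBackup P R γ V) := by
  have hγ : 0 < 1 - γ := sub_pos.2 hγ₁
  have hperf : perf P R π μ γ = ∑ s, μ s * V s := by
    have h := one_sub_mul_sum_sub_perf hP hπ hμ hγ₀ hγ₁ R V
    simp only [hV.eq, sub_self, mul_zero, sum_const_zero, mul_eq_zero, hγ.ne', false_or] at h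
    exact (sub_eq_zero.1 h).symm
  have hadv (s : S) : V s - bellmanOp P R γ π' V s =
      ∑ a, (π s a - π' s a) * bellmanBackup P R γ V s a := by
    conv_lhs => rw [← congrFun hV s]
    simp only [bellmanOp, sub_mul, sum_sub_distrib]
  rw [perfDiff, ← abs_of_pos hγ, ← abs_mul, hperf,
    one_sub_mul_sum_sub_perf hP hπ' hμ hγ₀ hγ₁ R V, errF]
  simp only [hadv]

end Bellman

/-! ### Error functionals -/

section PolicyError

variable [Fintype S] [Fintype A] {ρ : S → ℝ} {π₁ π₂ : S → A → ℝ}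

lemma errF_add_le (ρ : S → ℝ) (π₁ π₂ F G : S → A → ℝ) :
    errF ρ π₁ π₂ (fun s a => F s a + G s a) ≤ errF ρ π₁ π₂ F + errF ρ π₁ π₂ G := by
  simp only [errF, mul_add, sum_add_distrib]
  exact abs_add_le _ _

lemma errF_const_mul (ρ : S → ℝ) (π₁ π₂ F : S → A → ℝ) (c : ℝ) :
    errF ρ π₁ π₂ (fun s a => c * F s a) = |c| * errF ρ π₁ π₂ F := by
  simp only [errF, mul_left_comm _ c, ← mul_sum, abs_mul]

lemma errF_bellmanBackup_le_latent_add_errors (ρ : S → ℝ) (π₁ π₂ : S → A → ℝ) (φ : S → Z)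
    (P : S → A → S → ℝ) (PZ : Z → A → S → ℝ) (R : S → A → ℝ) (RZ : Z → A → ℝ) {γ : ℝ}
    (hγ₀ : 0 ≤ γ) (V : S → ℝ) :
    errF ρ π₁ π₂ (bellmanBackup P R γ V) ≤
      errF ρ π₁ π₂ (fun s => bellmanBackup PZ RZ γ V (φ s)) +
        (errF ρ π₁ π₂ (fun s a => R s a - RZ (φ s) a) +
          γ * errF ρ π₁ π₂ (fun s a => ∑ s', (P s a s' - PZ (φ s) a s') * V s')) := by
  have hsplit : bellmanBackup P R γ V = fun s a => bellmanBackup PZ RZ γ V (φ s) a +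
      (R s a - RZ (φ s) a + γ * ∑ s', (P s a s' - PZ (φ s) a s') * V s') := by
    funext s a
    simp only [bellmanBackup, sub_mul, sum_sub_distrib]
    ring
  have hγ := errF_const_mul ρ π₁ π₂ (fun s a => ∑ s', (P s a s' - PZ (φ s) a s') * V s') γ
  rw [abs_of_nonneg hγ₀] at hγ
  rw [hsplit, ← hγ]
  exact (errF_add_le ..).trans (add_le_add_right (errF_add_le ..) _)

lemma errF_le_sum_abs (hρ : ∀ s, 0 ≤ ρ s) (hπ₁ : ∀ s, π₁ s ∈ stdSimplex ℝ A)
    (hπ₂ : ∀ s, π₂ s ∈ stdSimplex ℝ A) (F : S → A → ℝ) :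
    errF ρ π₁ π₂ F ≤ ∑ s, ρ s * ∑ a, |F s a| := by
  have hπ (s : S) (a : A) : |π₁ s a - π₂ s a| ≤ 1 := by
    have h₁ := mem_Icc_of_mem_stdSimplex (hπ₁ s) a
    have h₂ := mem_Icc_of_mem_stdSimplex (hπ₂ s) a
    exact abs_sub_le_iff.2 ⟨by linarith [h₁.2, h₂.1], by linarith [h₁.1, h₂.2]⟩
  refine (abs_sum_le_sum_abs _ _).trans (sum_le_sum fun s _ => ?_)
  rw [abs_mul, abs_of_nonneg (hρ s)]
  refine mul_le_mul_of_nonneg_left ((abs_sum_le_sum_abs _ _).trans ?_) (hρ s)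
  refine sum_le_sum fun a _ => ?_
  rw [abs_mul]
  exact mul_le_of_le_one_left (abs_nonneg _) (hπ s a)

lemma errF_le_one_add_sqrt_dChi2_mul [Nonempty A] (hρ : ∀ s, 0 ≤ ρ s)
    (hπ₁ : ∀ s, π₁ s ∈ stdSimplex ℝ A) (hπ₂ : ∀ s, π₂ s ∈ stdSimplex ℝ A)
    {w : S → ℝ} (hw : w ∈ stdSimplex ℝ S) (hρw : ∀ s, 0 < ρ s → 0 < w s)
    {F H : S → A → ℝ} (hFH : ∀ s, 0 < w s → ∀ a, F s a ^ 2 ≤ H s a) :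
    errF ρ π₁ π₂ F ≤ (1 + √(dChi2 ρ w)) * (Fintype.card A *
      √(∑ s, w s * (1 / (Fintype.card A : ℝ) * ∑ a, H s a))) := by
  set n := (Fintype.card A : ℝ)
  have hn₀ : 0 < n := by positivity
  have hzero (s : S) (hs : w s = 0) : ρ s = 0 :=
    (hρ s).antisymm' (not_lt.1 fun h => (hρw s h).ne' hs)
  have hmean (s : S) (hs : 0 < w s) : ((∑ a, |F s a|) / n) ^ 2 ≤ 1 / n * ∑ a, H s a :=
    calc ((∑ a, |F s a|) / n) ^ 2 ≤ (∑ a, |F s a| ^ 2) / n :=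
          sum_div_card_sq_le_sum_sq_div_card
      _ = 1 / n * ∑ a, F s a ^ 2 := by simp only [sq_abs]; ring
      _ ≤ 1 / n * ∑ a, H s a := by gcongr with a; exact hFH s hs a
  calc errF ρ π₁ π₂ F ≤ ∑ s, ρ s * ∑ a, |F s a| := errF_le_sum_abs hρ hπ₁ hπ₂ F
    _ = n * ∑ s, ρ s * ((∑ a, |F s a|) / n) := by
      rw [mul_sum]
      exact sum_congr rfl fun s _ => by field_simp
    _ ≤ n * ((1 + √(dChi2 ρ w)) * √(∑ s, w s * ((∑ a, |F s a|) / n) ^ 2)) := by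
      gcongr
      exact sum_mul_le_one_add_sqrt_dChi2_mul hw hzero _
    _ ≤ n * ((1 + √(dChi2 ρ w)) * √(∑ s, w s * (1 / n * ∑ a, H s a))) := by
      gcongr n * (_ * √?_)
      exact sum_mul_le_sum_mul_of_pos hw.1 hmean
    _ = (1 + √(dChi2 ρ w)) * (n * √(∑ s, w s * (1 / n * ∑ a, H s a))) := by ring

lemma errF_le_two_mul_sqrt_dKL (hρ : ρ ∈ stdSimplex ℝ S) (hπ₁ : ∀ s, π₁ s ∈ stdSimplex ℝ A)
    (hπ₂ : ∀ s, 0 < ρ s → π₂ s ∈ stdSimplex ℝ A)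
    (hac : ∀ s, 0 < ρ s → ∀ a, 0 < π₂ s a → 0 < π₁ s a)
    {Q : S → A → ℝ} {C : ℝ} (hC : 0 ≤ C) (hQ : ∀ s a, |Q s a| ≤ C) :
    errF ρ π₁ π₂ Q ≤ 2 * C * √(1 / 2 * ∑ s, ρ s * dKL (π₂ s) (π₁ s)) :=
  calc errF ρ π₁ π₂ Q ≤ ∑ s, ρ s * (2 * C * dTV (π₂ s) (π₁ s)) := by
        refine (abs_sum_le_sum_abs _ _).trans (sum_le_sum fun s _ => ?_)
        rw [abs_mul, abs_of_nonneg (hρ.1 s), dTV_comm]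
        exact mul_le_mul_of_nonneg_left (abs_sum_sub_mul_le_dTV _ _ (hQ s)) (hρ.1 s)
    _ = 2 * C * ∑ s, ρ s * dTV (π₂ s) (π₁ s) := by
        simp only [mul_left_comm _ (2 * C), ← mul_sum]
    _ ≤ 2 * C * √(∑ s, ρ s * dTV (π₂ s) (π₁ s) ^ 2) := by
        gcongr
        exact sum_mul_le_sqrt_sum_mul_sq hρ _
    _ ≤ 2 * C * √(∑ s, ρ s * (1 / 2 * dKL (π₂ s) (π₁ s))) := by
        gcongr 2 * C * √?_
        exact sum_mul_le_sum_mul_of_pos hρ.1 fun s hs =>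
          dTV_sq_le_half_dKL (hπ₂ s hs) (hπ₁ s) (hac s hs)
    _ = 2 * C * √(1 / 2 * ∑ s, ρ s * dKL (π₂ s) (π₁ s)) := by
        simp only [mul_left_comm _ (1 / 2 : ℝ), ← mul_sum]

end PolicyError

section Marginal

variable [Fintype S] [DecidableEq Z] {φ : S → Z} {ρ : S → ℝ} {π : S → A → ℝ}

lemma sum_margDist_mul [Fintype Z] (φ : S → Z) (ρ : S → ℝ) (f : Z → ℝ) :
    ∑ z, margDist φ ρ z * f z = ∑ s, ρ s * f (φ s) := by
  simp only [margDist, sum_mul, ite_mul, zero_mul]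
  rw [sum_comm]
  simp only [sum_ite_eq, mem_univ, if_true]

lemma margDist_nonneg (hρ : ∀ s, 0 ≤ ρ s) (z : Z) : 0 ≤ margDist φ ρ z :=
  sum_nonneg fun s _ => by split_ifs; exacts [hρ s, le_rfl]

lemma margDist_mem_stdSimplex [Fintype Z] (φ : S → Z) (hρ : ρ ∈ stdSimplex ℝ S) :
    margDist φ ρ ∈ stdSimplex ℝ Z :=
  ⟨margDist_nonneg hρ.1, by simpa only [mul_one, hρ.2] using sum_margDist_mul φ ρ fun _ => 1⟩

lemma exists_pos_of_margDist_pos {z : Z} (h : 0 < margDist φ ρ z) : ∃ s, φ s = z ∧ 0 < ρ s := by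
  obtain ⟨s, -, hs⟩ := exists_lt_of_sum_lt (s := univ) (f := fun _ : S => (0 : ℝ))
    (by simpa only [margDist, sum_const_zero] using h)
  split_ifs at hs with hφ
  · exact ⟨s, hφ, hs⟩
  · exact hs.false.elim

lemma margPolicy_mem_stdSimplex [Fintype A] (hρ : ∀ s, 0 ≤ ρ s)
    (hπ : ∀ s, π s ∈ stdSimplex ℝ A) {z : Z} (hz : 0 < margDist φ ρ z) :
    margPolicy φ ρ π z ∈ stdSimplex ℝ A := by
  refine ⟨fun a => div_nonneg
    (margDist_nonneg (ρ := fun s => ρ s * π s a) (fun s => mul_nonneg (hρ s) ((hπ s).1 a)) z)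
    hz.le, ?_⟩
  simp only [margPolicy, ← sum_div]
  rw [div_eq_one_iff_eq hz.ne', sum_comm, margDist]
  refine sum_congr rfl fun s _ => ?_
  split_ifs
  · rw [← mul_sum, (hπ s).2, mul_one]
  · exact sum_const_zero

lemma margDist_mul_margPolicy (hρ : ∀ s, 0 ≤ ρ s) (z : Z) (a : A) :
    margDist φ ρ z * margPolicy φ ρ π z a = margDist φ (fun s => ρ s * π s a) z := by
  rcases (margDist_nonneg hρ z).eq_or_lt with hz | hz
  · have hfiber := (sum_eq_zero_iff_of_nonneg fun s _ => by
      split_ifs; exacts [hρ s, le_rfl]).1 hz.symm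
    rw [← hz, zero_mul, margDist]
    refine (sum_eq_zero fun s hs => ?_).symm
    split_ifs with hφ
    · rw [(if_pos hφ).symm.trans (hfiber s hs), zero_mul]
    · rfl
  · exact mul_div_cancel₀ _ hz.ne'

lemma exists_pos_of_margPolicy_pos (hρ : ∀ s, 0 ≤ ρ s) {z : Z} {a : A}
    (hz : 0 < margDist φ ρ z) (h : 0 < margPolicy φ ρ π z a) :
    ∃ s, φ s = z ∧ 0 < ρ s ∧ 0 < π s a := by
  obtain ⟨s, hφ, hs⟩ := exists_pos_of_margDist_pos
    ((mul_pos hz h).trans_eq (margDist_mul_margPolicy hρ z a))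
  exact ⟨s, hφ, (pos_and_pos_or_neg_and_neg_of_mul_pos hs).resolve_right
    fun hneg => hneg.1.not_ge (hρ s)⟩

lemma errF_comp_eq_errF_margDist [Fintype A] [Fintype Z] (hρ : ∀ s, 0 ≤ ρ s) (πZ Q : Z → A → ℝ) :
    errF ρ (fun s => πZ (φ s)) π (fun s => Q (φ s)) =
      errF (margDist φ ρ) πZ (margPolicy φ ρ π) Q := by
  simp only [errF, sub_mul, sum_sub_distrib, mul_sub, mul_sum, ← mul_assoc,
    margDist_mul_margPolicy hρ]
  rw [sum_comm, sum_comm (f := fun s a => ρ s * π s a * _), sum_comm (s := (univ : Finset Z)),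
    sum_comm (s := (univ : Finset Z))]
  simp only [mul_assoc, sum_margDist_mul]

end Marginal

section Representation

variable [Fintype S] [Fintype A] {φ : S → Z}

/-- The reward error `J_R` of the latent reward `RZ`, under states drawn from `w` and uniform
actions. -/
def rewardError (w : S → ℝ) (φ : S → Z) (R : S → A → ℝ) (RZ : Z → A → ℝ) : ℝ :=
  √(∑ s, w s * ((1 / (Fintype.card A : ℝ)) * ∑ a, (R s a - RZ (φ s) a) ^ 2))

/-- The transition error `J_T` of the latent model `PZ`, under states drawn from `w` and uniform
actions. -/
def transitionError (w : S → ℝ) (φ : S → Z) (P : S → A → S → ℝ) (PZ : Z → A → S → ℝ) : ℝ :=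
  √((1 / 2) * ∑ s, w s * ((1 / (Fintype.card A : ℝ)) * ∑ a, dKL (P s a) (PZ (φ s) a)))

/-- The imitation error of the latent policy `πZ` against the marginalization of `π` with respect
to `ρ`, bounding the mean total variation distance between the two through Pinsker's inequality. -/
def imitationError [Fintype Z] [DecidableEq Z] (ρ : S → ℝ) (φ : S → Z) (π : S → A → ℝ)
    (πZ : Z → A → ℝ) : ℝ :=
  √((1 / 2) * ∑ z, margDist φ ρ z * dKL (margPolicy φ ρ π z) (πZ z))

lemma errF_comp_le_imitationError [Fintype Z] [DecidableEq Z] {ρ : S → ℝ}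
    (hρ : ρ ∈ stdSimplex ℝ S) {π : S → A → ℝ} (hπ : ∀ s, π s ∈ stdSimplex ℝ A)
    {πZ : Z → A → ℝ} (hπZ : ∀ z, πZ z ∈ stdSimplex ℝ A)
    (hac : ∀ s a, 0 < ρ s → 0 < π s a → 0 < πZ (φ s) a)
    {Q : Z → A → ℝ} {C : ℝ} (hC : 0 ≤ C) (hQ : ∀ z a, |Q z a| ≤ C) :
    errF ρ (fun s => πZ (φ s)) π (fun s => Q (φ s)) ≤ 2 * C * imitationError ρ φ π πZ := by
  rw [errF_comp_eq_errF_margDist hρ.1]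
  refine errF_le_two_mul_sqrt_dKL (margDist_mem_stdSimplex φ hρ) hπZ
    (fun z hz => margPolicy_mem_stdSimplex hρ.1 hπ hz) (fun z hz a ha => ?_) hC hQ
  obtain ⟨s, rfl, hρs, hπs⟩ := exists_pos_of_margPolicy_pos hρ.1 hz ha
  exact hac s a hρs hπs

variable [Nonempty A] {ρ w : S → ℝ} {π₁ π₂ : S → A → ℝ}

lemma errF_sub_reward_le_rewardError (hρ : ∀ s, 0 ≤ ρ s)
    (hπ₁ : ∀ s, π₁ s ∈ stdSimplex ℝ A) (hπ₂ : ∀ s, π₂ s ∈ stdSimplex ℝ A)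
    (hw : w ∈ stdSimplex ℝ S) (hρw : ∀ s, 0 < ρ s → 0 < w s) (R : S → A → ℝ) (RZ : Z → A → ℝ) :
    errF ρ π₁ π₂ (fun s a => R s a - RZ (φ s) a) ≤
      (1 + √(dChi2 ρ w)) * (Fintype.card A * rewardError w φ R RZ) :=
  errF_le_one_add_sqrt_dChi2_mul hρ hπ₁ hπ₂ hw hρw fun _ _ _ => le_rfl

lemma errF_sum_sub_mul_le_transitionError (hρ : ∀ s, 0 ≤ ρ s)
    (hπ₁ : ∀ s, π₁ s ∈ stdSimplex ℝ A) (hπ₂ : ∀ s, π₂ s ∈ stdSimplex ℝ A)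
    (hw : w ∈ stdSimplex ℝ S) (hρw : ∀ s, 0 < ρ s → 0 < w s)
    {P : S → A → S → ℝ} (hP : ∀ s a, P s a ∈ stdSimplex ℝ S)
    {PZ : Z → A → S → ℝ} (hPZ : ∀ z a, PZ z a ∈ stdSimplex ℝ S)
    (hac : ∀ s a s', 0 < P s a s' → 0 < w s → 0 < PZ (φ s) a s')
    {V : S → ℝ} {C : ℝ} (hC : 0 ≤ C) (hV : ∀ s, |V s| ≤ C) :
    errF ρ π₁ π₂ (fun s a => ∑ s', (P s a s' - PZ (φ s) a s') * V s') ≤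
      (1 + √(dChi2 ρ w)) * (Fintype.card A * (2 * C * transitionError w φ P PZ)) := by
  have hsq (s : S) (hs : 0 < w s) (a : A) : (∑ s', (P s a s' - PZ (φ s) a s') * V s') ^ 2 ≤
      (2 * C) ^ 2 * (1 / 2 * dKL (P s a) (PZ (φ s) a)) :=
    calc (∑ s', (P s a s' - PZ (φ s) a s') * V s') ^ 2
        ≤ (2 * C * dTV (P s a) (PZ (φ s) a)) ^ 2 :=
          sq_le_sq.2 ((abs_sum_sub_mul_le_dTV _ _ hV).trans (le_abs_self _))
      _ = (2 * C) ^ 2 * dTV (P s a) (PZ (φ s) a) ^ 2 := mul_pow _ _ _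
      _ ≤ (2 * C) ^ 2 * (1 / 2 * dKL (P s a) (PZ (φ s) a)) := by
        gcongr
        exact dTV_sq_le_half_dKL (hP s a) (hPZ _ a) fun s' hs' => hac s a s' hs' hs
  have hscale : ∑ s, w s * (1 / (Fintype.card A : ℝ) *
      ∑ a, (2 * C) ^ 2 * (1 / 2 * dKL (P s a) (PZ (φ s) a))) = (2 * C) ^ 2 *
        (1 / 2 * ∑ s, w s * (1 / (Fintype.card A : ℝ) * ∑ a, dKL (P s a) (PZ (φ s) a))) := by
    simp only [mul_sum]
    exact sum_congr rfl fun s _ => sum_congr rfl fun a _ => by ring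
  refine (errF_le_one_add_sqrt_dChi2_mul hρ hπ₁ hπ₂ hw hρw hsq).trans_eq ?_
  rw [hscale, Real.sqrt_mul (sq_nonneg _), Real.sqrt_sq (by positivity), transitionError]

end Representation

theorem off_policy_representation_bound_general [Fintype S] [Fintype A] [Fintype Z] [Nonempty A]
    [DecidableEq Z]
    {P : S → A → S → ℝ} (hP : ∀ s a, P s a ∈ stdSimplex ℝ S)
    {R : S → A → ℝ} {Rmax : ℝ} (hRmax : 0 ≤ Rmax) (hR : ∀ s a, |R s a| ≤ Rmax)
    {μ : S → ℝ} (hμ : μ ∈ stdSimplex ℝ S) {γ : ℝ} (hγ₀ : 0 ≤ γ) (hγ₁ : γ < 1)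
    {πstar : S → A → ℝ} (hπs : ∀ s, πstar s ∈ stdSimplex ℝ A)
    {doff : S → ℝ} (hdoff : doff ∈ stdSimplex ℝ S)
    (hsupp : ∀ s, 0 < visitation P πstar μ γ s → 0 < doff s)
    {φ : S → Z} {RZ : Z → A → ℝ} (hRZ : ∀ z a, |RZ z a| ≤ Rmax)
    {PZ : Z → A → S → ℝ} (hPZ : ∀ z a, PZ z a ∈ stdSimplex ℝ S)
    (hPZpos : ∀ s a s', 0 < P s a s' → 0 < doff s → 0 < PZ (φ s) a s')
    {πZ : Z → A → ℝ} (hπZ : ∀ z, πZ z ∈ stdSimplex ℝ A)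
    (hπZpos : ∀ s a, 0 < visitation P πstar μ γ s → 0 < πstar s a → 0 < πZ (φ s) a) :
    perfDiff P R μ γ (fun s => πZ (φ s)) πstar ≤
      (1 + √(dChi2 (visitation P πstar μ γ) doff)) *
          ((Fintype.card A : ℝ) / (1 - γ) * rewardError doff φ R RZ +
            2 * γ * (Fintype.card A : ℝ) * Rmax / (1 - γ) ^ 2 * transitionError doff φ P PZ) +
        2 * Rmax / (1 - γ) ^ 2 * imitationError (visitation P πstar μ γ) φ πstar πZ := by
  have hγ : 0 < 1 - γ := sub_pos.2 hγ₁
  have hC : 0 ≤ Rmax / (1 - γ) := div_nonneg hRmax hγ.le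
  have hd := visitation_mem_stdSimplex hP hπs hμ hγ₀ hγ₁
  have hπ (s : S) : πZ (φ s) ∈ stdSimplex ℝ A := hπZ (φ s)
  obtain ⟨V, hfix, hV⟩ := exists_isFixedPt_bellmanOp_abs_le hP hπ hR hγ₀ hγ₁
  have hQ (z : Z) (a : A) : |bellmanBackup PZ RZ γ V z a| ≤ Rmax / (1 - γ) :=
    (abs_bellmanBackup_le hPZ hRZ hγ₀ hV z a).trans_eq (by field_simp; ring)
  have himitation := errF_comp_le_imitationError hd hπs hπZ hπZpos hC hQ
  have hreward := errF_sub_reward_le_rewardError (φ := φ) hd.1 hπ hπs hdoff hsupp R RZ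
  have htransition :=
    errF_sum_sub_mul_le_transitionError hd.1 hπ hπs hdoff hsupp hP hPZ hPZpos hC hV
  have htotal := (one_sub_mul_perfDiff_eq_errF hP hπ hπs hμ hγ₀ hγ₁ hfix).trans_le <|
    (errF_bellmanBackup_le_latent_add_errors _ _ _ φ P PZ R RZ hγ₀ V).trans <|
      add_le_add himitation (add_le_add hreward (mul_le_mul_of_nonneg_left htransition hγ₀))
  refine ((le_div_iff₀' hγ).2 htotal).trans_eq ?_
  field_simp
  ring

theorem off_policy_representation_bound
    [Fintype S] [Fintype A] [Fintype Z] [Nonempty S] [Nonempty A] [DecidableEq Z]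
    (P : S → A → S → ℝ) (hP0 : ∀ s a s', 0 ≤ P s a s')
    (hP1 : ∀ s a, ∑ s' : S, P s a s' = 1)
    (R : S → A → ℝ) (Rmax : ℝ) (hRmax : 0 ≤ Rmax) (hR : ∀ s a, |R s a| ≤ Rmax)
    (μ : S → ℝ) (hμ0 : ∀ s, 0 ≤ μ s) (hμ1 : ∑ s : S, μ s = 1)
    (γ : ℝ) (hγ0 : 0 ≤ γ) (hγ1 : γ < 1)
    (πstar : S → A → ℝ)
    (hπs0 : ∀ s a, 0 ≤ πstar s a) (hπs1 : ∀ s, ∑ a : A, πstar s a = 1)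
    (doff : S → ℝ) (hdoff0 : ∀ s, 0 ≤ doff s) (hdoff1 : ∑ s : S, doff s = 1)
    (hsupp : ∀ s, 0 < visitation P πstar μ γ s → 0 < doff s)
    (φ : S → Z)
    (RZ : Z → A → ℝ) (hRZ : ∀ z a, |RZ z a| ≤ Rmax)
    (PZ : Z → A → S → ℝ) (hPZ0 : ∀ z a s', 0 ≤ PZ z a s')
    (hPZ1 : ∀ z a, ∑ s' : S, PZ z a s' = 1)
    (hPZpos : ∀ s a s', 0 < P s a s' → 0 < doff s → 0 < PZ (φ s) a s')
    (πZ : Z → A → ℝ) (hπZ0 : ∀ z a, 0 < πZ z a) (hπZ1 : ∀ z, ∑ a : A, πZ z a = 1) :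
    perfDiff P R μ γ (fun s => πZ (φ s)) πstar ≤
      (1 + Real.sqrt (dChi2 (visitation P πstar μ γ) doff)) *
          ((Fintype.card A : ℝ) / (1 - γ) *
              Real.sqrt (∑ s : S, doff s *
                ((1 / (Fintype.card A : ℝ)) * ∑ a : A, (R s a - RZ (φ s) a) ^ 2))
            + 2 * γ * (Fintype.card A : ℝ) * Rmax / (1 - γ) ^ 2 *
              Real.sqrt ((1 / 2) * ∑ s : S, doff s *
                ((1 / (Fintype.card A : ℝ)) * ∑ a : A, dKL (P s a) (PZ (φ s) a))))
        + (2 * Rmax / (1 - γ) ^ 2) *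
            Real.sqrt ((1 / 2) * ∑ z : Z, margDist φ (visitation P πstar μ γ) z *
              dKL (margPolicy φ (visitation P πstar μ γ) πstar z) (πZ z)) := by
  exact off_policy_representation_bound_general (fun s a => ⟨hP0 s a, hP1 s a⟩) hRmax hR ⟨hμ0, hμ1⟩
    hγ0 hγ1 (fun s => ⟨hπs0 s, hπs1 s⟩) ⟨hdoff0, hdoff1⟩ hsupp hRZ (fun z a => ⟨hPZ0 z a, hPZ1 z a⟩)
    hPZpos (fun z => ⟨fun a => (hπZ0 z a).le, hπZ1 z⟩) fun s a _ _ => hπZ0 (φ s) a
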